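/- The joint posterior kernel p(β, σ², v^{-1} | y) ∝ (σ²)^{-((n+p)/2+1)} ∏_j v_j^{-1/2-η} exp(−[(y−Xβ)'(y−Xβ) + β'V^{-1}β]/(2σ²)) exp(−μ Σ_j v_j^{-1}) is finitely integrable over β ∈ R^p, σ² ∈ (0,∞), and v_1^{-1},...,v_p^{-1} ∈ (0,∞), provided μ > 0, η > -1/2, X'X is positive definite, and y'y − y'X(X'X)^{-1}X'y > 0; hence the posterior distribution is proper. -/

import Mathlib

open Matrix MeasureTheory Set

theorem Real.rpow_neg_mul_exp_neg_div_le {a A s : ℝ} (ha : 0 < a) (hA : 0 < A) (hs : 0 < s) :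
    s ^ (-a) * Real.exp (-A / s) ≤ a ^ a * A ^ (-a) := by
  have ht : 0 < A / s := div_pos hA hs
  have h1 : A / s ≤ a * Real.exp (A / s / a) := by
    have h := Real.add_one_le_exp (A / s / a)
    calc A / s = a * (A / s / a) := by field_simp
      _ ≤ a * Real.exp (A / s / a) := by gcongr; linarith
  have h2 : (A / s) ^ a ≤ a ^ a * Real.exp (A / s) := by
    calc (A / s) ^ a ≤ (a * Real.exp (A / s / a)) ^ a := by gcongr
      _ = a ^ a * Real.exp (A / s) := by
        rw [Real.mul_rpow ha.le (Real.exp_pos _).le, ← Real.exp_mul, div_mul_cancel₀ _ ha.ne']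
  have h3 : s ^ (-a) = A ^ (-a) * (A / s) ^ a := by
    rw [Real.div_rpow hA.le hs.le, Real.rpow_neg hA.le, Real.rpow_neg hs.le]
    have := (Real.rpow_pos_of_pos hA a).ne'
    field_simp
  calc s ^ (-a) * Real.exp (-A / s)
      = A ^ (-a) * (A / s) ^ a * Real.exp (-A / s) := by rw [h3]
    _ ≤ A ^ (-a) * (a ^ a * Real.exp (A / s)) * Real.exp (-A / s) := by gcongr
    _ = a ^ a * A ^ (-a) * (Real.exp (A / s) * Real.exp (-A / s)) := by ring
    _ = a ^ a * A ^ (-a) := by rw [← Real.exp_add, neg_div, add_neg_cancel, Real.exp_zero, mul_one]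

theorem integrableOn_rpow_neg_mul_exp_neg_div {k B : ℝ} (hk : 0 < k) (hB : 0 < B) :
    IntegrableOn (fun s : ℝ => s ^ (-(k + 1)) * Real.exp (-B / s)) (Ioi 0) := by
  have hm : Measurable (fun s : ℝ => s ^ (-(k + 1)) * Real.exp (-B / s)) := by fun_prop
  rw [← Ioc_union_Ioi_eq_Ioi (zero_le_one (α := ℝ))]
  refine IntegrableOn.union ?_ ?_
  · refine Measure.integrableOn_of_bounded (M := (k + 1) ^ (k + 1) * B ^ (-(k + 1)))
      (by simp) hm.aestronglyMeasurable ?_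
    filter_upwards [ae_restrict_mem measurableSet_Ioc] with s hs
    have hs0 : 0 < s := hs.1
    rw [Real.norm_of_nonneg (by positivity)]
    exact Real.rpow_neg_mul_exp_neg_div_le (by linarith) hB hs0
  · refine Integrable.mono' (integrableOn_Ioi_rpow_of_lt (a := -(k + 1)) (by linarith) one_pos)
      hm.aestronglyMeasurable ?_
    filter_upwards [ae_restrict_mem measurableSet_Ioi] with s hs
    have hs0 : 0 < s := one_pos.trans hs
    rw [Real.norm_of_nonneg (by positivity)]
    refine mul_le_of_le_one_right (by positivity) (Real.exp_le_one_iff.2 ?_)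
    rw [neg_div]
    exact neg_nonpos.2 (by positivity)

/-- The residual sum of squares at `β` is its minimal value plus the quadratic form of the Gram
matrix at the deviation of `β` from the least squares estimate. -/
theorem Matrix.residual_dotProduct_self {m n : Type*} [Fintype m] [Fintype n] [DecidableEq n]
    (X : Matrix m n ℝ) (y : m → ℝ) (h : IsUnit (Xᵀ * X)) (β : n → ℝ) :
    (y - X *ᵥ β) ⬝ᵥ (y - X *ᵥ β) =
      (y ⬝ᵥ y - y ⬝ᵥ (X * (Xᵀ * X)⁻¹ * Xᵀ) *ᵥ y) +
        (X *ᵥ (β - (Xᵀ * X)⁻¹ *ᵥ (Xᵀ *ᵥ y))) ⬝ᵥ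
          (X *ᵥ (β - (Xᵀ * X)⁻¹ *ᵥ (Xᵀ *ᵥ y))) := by
  set b := (Xᵀ * X)⁻¹ *ᵥ (Xᵀ *ᵥ y) with hb
  have hnormal : (Xᵀ * X) *ᵥ b = Xᵀ *ᵥ y := by
    rw [hb, mulVec_mulVec, mul_nonsing_inv _ ((isUnit_iff_isUnit_det _).1 h), one_mulVec]
  have hfit : (X * (Xᵀ * X)⁻¹ * Xᵀ) *ᵥ y = X *ᵥ b := by
    simp [hb, mulVec_mulVec, Matrix.mul_assoc]
  have horth : ∀ u : n → ℝ, (X *ᵥ u) ⬝ᵥ (X *ᵥ b) = (X *ᵥ u) ⬝ᵥ y := by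
    intro u
    have h1 : ∀ w : m → ℝ, (X *ᵥ u) ⬝ᵥ w = u ⬝ᵥ (Xᵀ *ᵥ w) := by
      intro w
      rw [mulVec_transpose, dotProduct_comm, dotProduct_mulVec, dotProduct_comm]
    rw [h1, h1, mulVec_mulVec, hnormal]
  have e1 := horth β
  have e2 := horth b
  rw [hfit]
  simp only [mulVec_sub, sub_dotProduct, dotProduct_sub]
  rw [dotProduct_comm (X *ᵥ b) (X *ᵥ β), e1, e2, dotProduct_comm y (X *ᵥ β),
    dotProduct_comm y (X *ᵥ b)]
  ring

theorem Matrix.exists_mul_norm_sq_le_of_posDef_gram {m n : Type*} [Fintype m] [Fintype n]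
    (X : Matrix m n ℝ) (h : (Xᵀ * X).PosDef) :
    ∃ c > 0, ∀ u : n → ℝ, c * ‖u‖ ^ 2 ≤ (X *ᵥ u) ⬝ᵥ (X *ᵥ u) := by
  have hker : X.mulVecLin.ker = ⊥ := by
    refine LinearMap.ker_eq_bot'.2 fun u hu => ?_
    by_contra hne
    have hpos := h.dotProduct_mulVec_pos hne
    rw [← mulVec_mulVec, show X *ᵥ u = 0 from hu] at hpos
    simp at hpos
  obtain ⟨K, hK, hanti⟩ := X.mulVecLin.exists_antilipschitzWith hker
  have hK' : (0 : ℝ) < K := hK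
  refine ⟨((K : ℝ) ^ 2)⁻¹, by positivity, fun u => ?_⟩
  have h1 : ‖u‖ ≤ K * ‖X *ᵥ u‖ := by
    simpa [dist_eq_norm] using hanti.le_mul_dist u 0
  have hnn : 0 ≤ (X *ᵥ u) ⬝ᵥ (X *ᵥ u) := by
    simpa using dotProduct_star_self_nonneg (X *ᵥ u)
  have h2 : ‖X *ᵥ u‖ ^ 2 ≤ (X *ᵥ u) ⬝ᵥ (X *ᵥ u) := by
    rw [← Real.le_sqrt (norm_nonneg _) hnn, pi_norm_le_iff_of_nonneg (Real.sqrt_nonneg _)]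
    intro i
    rw [Real.norm_eq_abs]
    refine Real.abs_le_sqrt ?_
    rw [sq]
    exact Finset.single_le_sum (f := fun i => (X *ᵥ u) i * (X *ᵥ u) i)
      (fun i _ => mul_self_nonneg _) (Finset.mem_univ i)
  rw [inv_mul_le_iff₀ (by positivity)]
  calc ‖u‖ ^ 2 ≤ (K * ‖X *ᵥ u‖) ^ 2 := by gcongr
    _ = K ^ 2 * ‖X *ᵥ u‖ ^ 2 := by ring
    _ ≤ K ^ 2 * ((X *ᵥ u) ⬝ᵥ (X *ᵥ u)) := by gcongr

theorem integrableOn_pi_prod_rpow_mul_exp_neg {ι : Type*} [Fintype ι] {q μ : ℝ} (hq : -1 < q)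
    (hμ : 0 < μ) :
    IntegrableOn (fun w : ι → ℝ => (∏ j, w j ^ q) * Real.exp (-μ * ∑ j, w j))
      (univ.pi fun _ => Ioi 0) := by
  have h : IntegrableOn (fun x : ℝ => x ^ q * Real.exp (-μ * x)) (Ioi 0) := by
    simpa using integrableOn_rpow_mul_exp_neg_mul_rpow hq one_pos hμ
  rw [IntegrableOn, volume_pi, Measure.restrict_pi_pi]
  refine (Integrable.fintype_prod (fun _ : ι => h)).congr (ae_of_all _ fun w => ?_)
  simp only [Finset.prod_mul_distrib, Finset.mul_sum, Real.exp_sum]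

theorem stmt_7 {n p : ℕ} (X : Matrix (Fin n) (Fin p) ℝ) (y : Fin n → ℝ)
    (μ η : ℝ) (hμ : 0 < μ) (hη : -1/2 < η)
    (hpd : (Xᵀ * X).PosDef)
    (hrss : 0 < y ⬝ᵥ y - y ⬝ᵥ (X * (Xᵀ * X)⁻¹ * Xᵀ) *ᵥ y) :
    IntegrableOn
      (fun z : (Fin p → ℝ) × ℝ × (Fin p → ℝ) =>
        z.2.1 ^ (-((n + p : ℝ) / 2 + 1)) *
          (∏ j, z.2.2 j ^ ((1:ℝ)/2 + η)) *
          Real.exp (-(((y - X *ᵥ z.1) ⬝ᵥ (y - X *ᵥ z.1)) +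
            ∑ j, z.2.2 j * (z.1 j) ^ 2) / (2 * z.2.1)) *
          Real.exp (-μ * ∑ j, z.2.2 j))
      (univ ×ˢ (Ioi 0 ×ˢ univ.pi fun _ => Ioi 0)) volume := by
  have hn : (0 : ℝ) < n := by
    rcases Nat.eq_zero_or_pos n with rfl | h
    · simp [dotProduct] at hrss
    · exact_mod_cast h
  have hp : (0 : ℝ) ≤ p := p.cast_nonneg
  obtain ⟨c, hc, hcX⟩ := X.exists_mul_norm_sq_le_of_posDef_gram hpd
  have hres := X.residual_dotProduct_self y hpd.isUnit
  set r := y ⬝ᵥ y - y ⬝ᵥ (X * (Xᵀ * X)⁻¹ * Xᵀ) *ᵥ y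
  set b := (Xᵀ * X)⁻¹ *ᵥ (Xᵀ *ᵥ y)
  set d := min r c / 4 with hd
  have hdpos : 0 < d := by have := lt_min hrss hc; positivity
  set a : ℝ := p / 2 + n / 4 with ha
  have hapos : 0 < a := by positivity
  have hβ : Integrable fun β : Fin p → ℝ =>
      a ^ a * (d * (1 + ‖β - b‖ ^ 2)) ^ (-a) := by
    have h := ((integrable_rpow_neg_one_add_norm_sq (E := Fin p → ℝ) (μ := volume) (r := 2 * a)
      (by simp [ha]; linarith)).comp_sub_right b).const_mul (a ^ a * d ^ (-a))
    refine h.congr (ae_of_all _ fun β => ?_)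
    simp only
    rw [Real.mul_rpow hdpos.le (by positivity), show -(2 * a) / 2 = -a by ring, mul_assoc]
  have hs := integrableOn_rpow_neg_mul_exp_neg_div (k := n / 4) (B := d) (by positivity) hdpos
  have hw := integrableOn_pi_prod_rpow_mul_exp_neg (ι := Fin p) (q := 1 / 2 + η)
    (by linarith) hμ
  have hdom := hβ.integrableOn (s := univ) |>.mul_prod (hs.mul_prod hw)
  rw [Measure.prod_restrict, Measure.prod_restrict] at hdom
  refine Integrable.mono' hdom ?_ ?_
  · refine Measurable.aestronglyMeasurable ?_
    simp only [mulVec, dotProduct, Pi.sub_apply]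
    fun_prop
  have hmeas : MeasurableSet ((univ : Set (Fin p → ℝ)) ×ˢ
      (Ioi (0 : ℝ) ×ˢ univ.pi fun _ : Fin p => Ioi (0 : ℝ))) :=
    MeasurableSet.univ.prod (measurableSet_Ioi.prod (MeasurableSet.univ_pi fun _ =>
      measurableSet_Ioi))
  filter_upwards [ae_restrict_mem hmeas] with z hz
  obtain ⟨β, s, w⟩ := z
  obtain ⟨-, hs0, hw0⟩ := hz
  simp only [mem_Ioi, mem_pi, mem_univ, forall_const] at hs0 hw0 ⊢
  have hprod : 0 ≤ ∏ j, w j ^ ((1:ℝ)/2 + η) :=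
    Finset.prod_nonneg fun j _ => Real.rpow_nonneg (hw0 j).le _
  rw [Real.norm_of_nonneg (by positivity)]
  have hexp : Real.exp (-(((y - X *ᵥ β) ⬝ᵥ (y - X *ᵥ β)) + ∑ j, w j * (β j) ^ 2) / (2 * s)) ≤
      Real.exp (-d / s) * Real.exp (-(d * (1 + ‖β - b‖ ^ 2)) / s) := by
    rw [← Real.exp_add, ← add_div, Real.exp_le_exp, div_le_div_iff₀ (by positivity) hs0]
    have h1 : 0 ≤ ∑ j, w j * (β j) ^ 2 :=
      Finset.sum_nonneg fun j _ => mul_nonneg (hw0 j).le (sq_nonneg _)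
    have h2 := hcX (β - b)
    have h3 : 4 * d ≤ r := by rw [hd]; linarith [min_le_left r c]
    have h4 : 4 * d * ‖β - b‖ ^ 2 ≤ c * ‖β - b‖ ^ 2 := by
      gcongr; rw [hd]; linarith [min_le_right r c]
    have h5 : 0 ≤ d * ‖β - b‖ ^ 2 := by positivity
    rw [hres]
    nlinarith
  have hpow : s ^ (-((n + p : ℝ) / 2 + 1)) = s ^ (-((n : ℝ) / 4 + 1)) * s ^ (-a) := by
    rw [← Real.rpow_add hs0]
    congr 1
    rw [ha]
    ring
  have hbound := Real.rpow_neg_mul_exp_neg_div_le (A := d * (1 + ‖β - b‖ ^ 2)) hapos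
    (by positivity) hs0
  rw [hpow]
  set P := ∏ j, w j ^ ((1:ℝ)/2 + η)
  set E := Real.exp (-μ * ∑ j, w j)
  calc _ ≤ s ^ (-((n : ℝ) / 4 + 1)) * s ^ (-a) * P *
        (Real.exp (-d / s) * Real.exp (-(d * (1 + ‖β - b‖ ^ 2)) / s)) * E := by gcongr
    _ = (s ^ (-a) * Real.exp (-(d * (1 + ‖β - b‖ ^ 2)) / s)) *
        (s ^ (-((n : ℝ) / 4 + 1)) * Real.exp (-d / s) * (P * E)) := by ring
    _ ≤ _ := by gcongr
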